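/- For α ∈ (0,1) and ξ > 0, the Laplace transform in t of the Mittag-Leffler function satisfies ∫₀^∞ e^{-λt} E_α(-ξ t^α) dt = λ^{α-1}/(λ^α + ξ) for all λ > 0. -/

import Mathlib

open MeasureTheory Real Set

/-- The one-parameter Mittag-Leffler function E_α(x) = Σ_{k≥0} x^k/Γ(αk+1). -/
noncomputable def mittagLeffler (α x : ℝ) : ℝ := ∑' k : ℕ, x ^ k / Real.Gamma (α * k + 1)

open Filter Topology

/-- Lower bound for the Gamma function. -/
lemma ml_gamma_lower (s M : ℝ) (hs : 0 ≤ s) (hM : 0 < M) :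
    M ^ s * Real.exp (-M) ≤ Real.Gamma (s + 1) := by
  have hint := Real.GammaIntegral_convergent (s := s + 1) (by linarith)
  rw [Real.Gamma_eq_integral (by linarith)]
  have hsub : Ioi M ⊆ Ioi (0:ℝ) := Ioi_subset_Ioi hM.le
  calc M ^ s * Real.exp (-M) = ∫ x in Ioi M, Real.exp (-x) * M ^ s := by
        rw [integral_mul_const, integral_exp_neg_Ioi, mul_comm]
    _ ≤ ∫ x in Ioi M, Real.exp (-x) * x ^ (s + 1 - 1) := by
        apply setIntegral_mono_on _ (hint.mono_set hsub) measurableSet_Ioi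
        · intro x hx
          have hx' : M < x := hx
          rw [add_sub_cancel_right]
          gcongr
        · have := integrableOn_exp_neg_Ioi M
          exact this.mul_const _
    _ ≤ _ := by
        apply setIntegral_mono_set hint
        · filter_upwards [ae_restrict_mem measurableSet_Ioi] with x hx
          have hx' : 0 < x := hx
          positivity
        · exact Eventually.of_forall hsub

lemma ml_summable (α : ℝ) (hα : 0 < α) (x : ℝ) :
    Summable (fun k : ℕ => |x| ^ k / Real.Gamma (α * k + 1)) := by
  set y := 2 * |x| + 1 with hy
  have hy0 : 0 < y := by positivity
  set M := y ^ (1 / α) with hMdef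
  have hM : 0 < M := by positivity
  have hMα : M ^ α = y := by
    rw [hMdef, ← Real.rpow_mul hy0.le]; field_simp; simp
  have hg : Summable (fun k : ℕ => Real.exp M * (|x| / y) ^ k) := by
    apply Summable.mul_left
    apply summable_geometric_of_lt_one (by positivity)
    rw [div_lt_one hy0]
    have := abs_nonneg x
    linarith
  refine Summable.of_nonneg_of_le (fun k => ?_) (fun k => ?_) hg
  · have : 0 < Real.Gamma (α * k + 1) := Real.Gamma_pos_of_pos (by positivity)
    positivity
  · have h := ml_gamma_lower (α * k) M (by positivity) hM
    rw [Real.rpow_mul hM.le, hMα, Real.rpow_natCast] at h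
    calc |x| ^ k / Real.Gamma (α * k + 1) ≤ |x| ^ k / (y ^ k * Real.exp (-M)) := by gcongr
      _ = Real.exp M * (|x| / y) ^ k := by
        rw [Real.exp_neg, div_pow]; field_simp

lemma ml_beta (a b T : ℝ) (ha : 0 < a) (hb : 0 < b) (hT : 0 < T) :
    ∫ s in (0:ℝ)..T, s ^ (b - 1) * (T - s) ^ (a - 1)
      = T ^ (a + b - 1) * (Real.Gamma a * Real.Gamma b / Real.Gamma (a + b)) := by
  have h := Complex.betaIntegral_scaled (b : ℂ) (a : ℂ) hT
  rw [Complex.betaIntegral_eq_Gamma_mul_div _ _ (by simpa) (by simpa)] at h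
  rw [← Complex.ofReal_inj, ← intervalIntegral.integral_ofReal]
  rw [Complex.Gamma_ofReal, Complex.Gamma_ofReal, ← Complex.ofReal_add,
    Complex.Gamma_ofReal] at h
  have h2 : ((T ^ (a + b - 1) * (Real.Gamma a * Real.Gamma b / Real.Gamma (a + b)) : ℝ) : ℂ)
      = (T:ℂ) ^ (((b + a : ℝ) : ℂ) - 1) *
        ((Real.Gamma b : ℂ) * (Real.Gamma a : ℂ) / (Real.Gamma (b + a) : ℂ)) := by
    push_cast
    rw [Complex.ofReal_cpow hT.le, mul_comm (Real.Gamma a : ℂ), add_comm a b]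
    push_cast
    rfl
  rw [h2, ← h]
  apply intervalIntegral.integral_congr
  intro s hs
  rw [uIcc_of_le hT.le] at hs
  simp only
  rw [Complex.ofReal_mul, Complex.ofReal_cpow hs.1, Complex.ofReal_cpow (by linarith [hs.2])]
  push_cast
  rfl

lemma ml_beta_int (a b T : ℝ) (ha : 0 < a) (hb : 0 < b) (hT : 0 < T) :
    IntervalIntegrable (fun s => s ^ (b - 1) * (T - s) ^ (a - 1)) volume 0 T := by
  by_contra h
  have h1 := ml_beta a b T ha hb hT
  rw [intervalIntegral.integral_undef h] at h1
  have h2 := Real.Gamma_pos_of_pos ha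
  have h3 := Real.Gamma_pos_of_pos hb
  have h4 := Real.Gamma_pos_of_pos (add_pos ha hb)
  have : 0 < T ^ (a + b - 1) * (Real.Gamma a * Real.Gamma b / Real.Gamma (a + b)) := by
    positivity
  linarith

/-- Fractional integration of a generalized power series, term by term. -/
lemma ml_frac (a : ℝ) (ha : 0 < a) (b d : ℕ → ℝ) (hb : ∀ k, 0 < b k) (T : ℝ) (hT : 0 < T)
    (hsum : Summable (fun k => |d k| * T ^ (a + b k - 1) / Real.Gamma (a + b k))) :
    ∫ s in (0:ℝ)..T, (T - s) ^ (a - 1) * ∑' k, d k * s ^ (b k - 1) / Real.Gamma (b k)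
      = Real.Gamma a * ∑' k, d k * T ^ (a + b k - 1) / Real.Gamma (a + b k) := by
  have hval : ∀ (c : ℝ) (k : ℕ),
      ∫ s in (0:ℝ)..T, c * (s ^ (b k - 1) * (T - s) ^ (a - 1)) / Real.Gamma (b k)
      = Real.Gamma a * (c * T ^ (a + b k - 1) / Real.Gamma (a + b k)) := by
    intro c k
    have h3 := Real.Gamma_pos_of_pos (hb k)
    rw [intervalIntegral.integral_div, intervalIntegral.integral_const_mul,
      ml_beta a (b k) T ha (hb k) hT]
    field_simp
  have key := hasSum_integral_of_summable_integral_norm (μ := volume.restrict (Ioc 0 T))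
    (F := fun k s => d k * (s ^ (b k - 1) * (T - s) ^ (a - 1)) / Real.Gamma (b k)) ?_ ?_
  · have h2 := key.tsum_eq
    simp_rw [← intervalIntegral.integral_of_le hT.le, hval] at h2
    rw [← tsum_mul_left, h2]
    apply intervalIntegral.integral_congr
    intro s hs
    simp only
    rw [← tsum_mul_left]
    congr 1
    ext k
    ring
  · intro k
    have := (ml_beta_int a (b k) T ha (hb k) hT).1
    exact (this.const_mul _).div_const _
  · have : ∀ k, ∫ s in Ioc 0 T,
        ‖d k * (s ^ (b k - 1) * (T - s) ^ (a - 1)) / Real.Gamma (b k)‖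
        = Real.Gamma a * (|d k| * T ^ (a + b k - 1) / Real.Gamma (a + b k)) := by
      intro k
      rw [← hval, intervalIntegral.integral_of_le hT.le]
      apply setIntegral_congr_fun measurableSet_Ioc
      intro s hs
      have h3 := Real.Gamma_pos_of_pos (hb k)
      have h4 : 0 ≤ s ^ (b k - 1) * (T - s) ^ (a - 1) :=
        mul_nonneg (Real.rpow_nonneg hs.1.le _) (Real.rpow_nonneg (by linarith [hs.2]) _)
      simp only
      rw [norm_div, norm_mul, Real.norm_of_nonneg h4, Real.norm_of_nonneg h3.le, Real.norm_eq_abs]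
    simp_rw [this]
    exact hsum.mul_left _

/-- Maximum principle for the Caputo derivative. -/
lemma ml_max (α T : ℝ) (hα : α ∈ Ioo (0:ℝ) 1) (hT : 0 < T) (φ g : ℝ → ℝ)
    (hc : ContinuousOn φ (Icc 0 T)) (hd : ∀ s ∈ Ioc 0 T, HasDerivAt φ (g s) s)
    (hmax : ∀ s ∈ Icc 0 T, φ s ≤ φ T)
    (hi : IntervalIntegrable (fun s => (T - s) ^ (-α) * g s) volume 0 T) :
    0 ≤ ∫ s in (0:ℝ)..T, (T - s) ^ (-α) * g s := by
  have h := intervalIntegral.sub_le_integral_of_hasDeriv_right_of_le (a := 0) (b := T)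
    (g := fun s => (T - s) ^ (-α) * (φ s - φ T))
    (g' := fun s => α * (T - s) ^ (-α - 1) * (φ s - φ T) + (T - s) ^ (-α) * g s)
    (φ := fun s => (T - s) ^ (-α) * g s) hT.le ?_ ?_ ?_ ?_
  · simp only [sub_self, mul_zero, sub_zero, zero_sub] at h
    have h0 := hmax 0 ⟨le_rfl, hT.le⟩
    have h1 : 0 ≤ T ^ (-α) * (φ T - φ 0) := mul_nonneg (Real.rpow_nonneg hT.le _) (by linarith)
    linarith
  · intro s hs
    rcases eq_or_lt_of_le hs.2 with rfl | hlt
    · have hds := (hd s ⟨hT, le_rfl⟩)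
      rw [hasDerivAt_iff_tendsto_slope] at hds
      rw [← continuousWithinAt_sdiff_self]
      have h1 : Tendsto (fun u => -((s - u) ^ (1 - α)) * slope φ s u)
          (𝓝[Icc 0 s \ {s}] s) (𝓝 (-((s - s) ^ (1 - α)) * g s)) := by
        apply Tendsto.mul
        · apply Tendsto.mono_left _ nhdsWithin_le_nhds
          have : Continuous (fun u : ℝ => -((s - u) ^ (1 - α))) := by
            apply Continuous.neg
            apply Continuous.rpow_const (by fun_prop)
            intro x; right; linarith [hα.2]
          exact this.tendsto s
        · apply hds.mono_left
          apply nhdsWithin_mono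
          intro u hu; exact hu.2
      have e : -((s - s) ^ (1 - α)) * g s = (s - s) ^ (-α) * (φ s - φ s) := by
        rw [sub_self, Real.zero_rpow (by linarith [hα.2])]; simp
      rw [e] at h1
      refine h1.congr' ?_
      filter_upwards [self_mem_nhdsWithin] with u hu
      have hus : 0 < s - u := by
        have := lt_of_le_of_ne hu.1.2 hu.2
        linarith
      rw [slope_def_field, show (1 - α) = -α + 1 by ring, Real.rpow_add_one hus.ne']
      have : u - s ≠ 0 := by linarith
      field_simp
      ring
    · apply ContinuousWithinAt.mul
      · apply ContinuousAt.continuousWithinAt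
        apply ContinuousAt.rpow_const (by fun_prop)
        left; linarith
      · exact (hc s hs).sub continuousWithinAt_const
  · intro s hs
    apply HasDerivAt.hasDerivWithinAt
    have h1 : HasDerivAt (fun u : ℝ => (T - u) ^ (-α)) (α * (T - s) ^ (-α - 1)) s := by
      have h0 : HasDerivAt (fun u : ℝ => T - u) (-1) s := by
        simpa using (hasDerivAt_id s).const_sub T
      have := h0.rpow_const (p := -α) (Or.inl (by linarith [hs.2]))
      convert this using 1
      ring
    exact h1.mul ((hd s ⟨hs.1, hs.2.le⟩).sub_const _)
  · rw [integrableOn_Icc_iff_integrableOn_Ioc]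
    exact hi.1
  · intro s hs
    have h0 := hmax s ⟨hs.1.le, hs.2.le⟩
    have h1 : 0 ≤ α * (T - s) ^ (-α - 1) :=
      mul_nonneg hα.1.le (Real.rpow_nonneg (by linarith [hs.2]) _)
    nlinarith [mul_nonneg h1 (sub_nonneg.2 h0)]

lemma ml_hasDeriv (α : ℝ) (hα : 0 < α) (x : ℝ) :
    HasDerivAt (mittagLeffler α) (∑' k : ℕ, (k * x ^ (k - 1)) / Real.Gamma (α * k + 1)) x := by
  set R := |x| + 1 with hR
  have hR1 : 1 ≤ R := by have := abs_nonneg x; linarith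
  have hx : x ∈ Ioo (-R) R := by
    rw [mem_Ioo, ← abs_lt]; linarith
  have hs := ml_summable α hα (2 * R)
  have := hasDerivAt_tsum_of_isPreconnected (t := Ioo (-R) R) (y₀ := x) (y := x)
    (g := fun (k : ℕ) (x : ℝ) => x ^ k / Real.Gamma (α * k + 1))
    (g' := fun (k : ℕ) (x : ℝ) => (k * x ^ (k - 1)) / Real.Gamma (α * k + 1))
    hs isOpen_Ioo isPreconnected_Ioo ?_ ?_ hx ?_ hx
  · exact this
  · intro n y _
    exact (hasDerivAt_pow n y).div_const _
  · intro n y hy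
    have hg : 0 < Real.Gamma (α * n + 1) := Real.Gamma_pos_of_pos (by positivity)
    rw [mem_Ioo, ← abs_lt] at hy
    rw [norm_div, Real.norm_of_nonneg hg.le]
    apply div_le_div_of_nonneg_right _ hg.le
    rw [norm_mul, norm_pow, Real.norm_eq_abs, Real.norm_eq_abs, Nat.abs_cast,
      abs_of_nonneg (by positivity : 0 ≤ 2 * R), mul_pow]
    have h1 : (n : ℝ) ≤ 2 ^ n := by exact_mod_cast Nat.lt_two_pow_self.le
    have h2 : |y| ^ (n - 1) ≤ R ^ n :=
      (pow_le_pow_left₀ (abs_nonneg _) hy.le _).trans (pow_le_pow_right₀ hR1 (Nat.sub_le _ _))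
    gcongr
  · refine (ml_summable α hα x).of_norm_bounded (fun k => ?_)
    have hg : 0 < Real.Gamma (α * k + 1) := Real.Gamma_pos_of_pos (by positivity)
    rw [norm_div, Real.norm_of_nonneg hg.le, norm_pow, Real.norm_eq_abs]

/-- The function whose Laplace transform we compute, as a series. -/
lemma ml_series (α ξ s : ℝ) (hs : 0 ≤ s) :
    mittagLeffler α (-(ξ * s ^ α))
      = ∑' k : ℕ, (-ξ) ^ k * s ^ ((α * k + 1) - 1) / Real.Gamma (α * k + 1) := by
  unfold mittagLeffler
  congr 1
  ext k
  rw [add_sub_cancel_right, Real.rpow_mul hs, Real.rpow_natCast, ← mul_pow]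
  congr 2
  ring

lemma ml_deriv (α ξ s : ℝ) (hα : 0 < α) (hs : 0 < s) :
    HasDerivAt (fun s => mittagLeffler α (-(ξ * s ^ α)))
      (∑' k : ℕ, (-ξ) ^ (k + 1) * s ^ ((α * (k + 1)) - 1) / Real.Gamma (α * (k + 1))) s := by
  have h1 : HasDerivAt (fun s : ℝ => -(ξ * s ^ α)) (-(ξ * (α * s ^ (α - 1)))) s :=
    ((Real.hasDerivAt_rpow_const (Or.inl hs.ne')).const_mul ξ).neg
  have h2 := (ml_hasDeriv α hα (-(ξ * s ^ α))).comp s h1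
  refine h2.congr_deriv ?_
  have hsum : Summable (fun k : ℕ => (k * (-(ξ * s ^ α)) ^ (k - 1)) / Real.Gamma (α * k + 1)) := by
    set x := -(ξ * s ^ α)
    set R := |x| + 1 with hR
    have hR1 : 1 ≤ R := by have := abs_nonneg x; linarith
    refine (ml_summable α hα (2 * R)).of_norm_bounded (fun n => ?_)
    have hg : 0 < Real.Gamma (α * n + 1) := Real.Gamma_pos_of_pos (by positivity)
    rw [norm_div, Real.norm_of_nonneg hg.le]
    apply div_le_div_of_nonneg_right _ hg.le
    rw [norm_mul, norm_pow, Real.norm_eq_abs, Real.norm_eq_abs, Nat.abs_cast,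
      abs_of_nonneg (by positivity : 0 ≤ 2 * R), mul_pow]
    have h1 : (n : ℝ) ≤ 2 ^ n := by exact_mod_cast Nat.lt_two_pow_self.le
    have h2 : |x| ^ (n - 1) ≤ R ^ n :=
      (pow_le_pow_left₀ (abs_nonneg _) (by linarith) _).trans
        (pow_le_pow_right₀ hR1 (Nat.sub_le _ _))
    gcongr
  rw [hsum.tsum_eq_zero_add]
  simp only [Nat.cast_zero, zero_mul, zero_div, zero_add, Nat.add_sub_cancel]
  rw [← tsum_mul_right]
  congr 1
  ext k
  have hk : 0 < α * ((k:ℝ) + 1) := by positivity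
  have hg := Real.Gamma_pos_of_pos hk
  push_cast
  rw [Real.Gamma_add_one hk.ne', show α * ((k:ℝ) + 1) - 1 = α * k + (α - 1) by ring,
    Real.rpow_add hs, Real.rpow_mul hs.le, Real.rpow_natCast,
    show -(ξ * s ^ α) = (-ξ) * s ^ α by ring, mul_pow]
  field_simp
  ring

/-- Caputo equation. -/
lemma ml_caputo (α ξ T : ℝ) (hα : α ∈ Ioo (0:ℝ) 1) (hT : 0 < T) :
    ∫ s in (0:ℝ)..T, (T - s) ^ (-α) *
      (∑' k : ℕ, (-ξ) ^ (k + 1) * s ^ ((α * (k + 1)) - 1) / Real.Gamma (α * (k + 1)))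
    = -(ξ * Real.Gamma (1 - α)) * mittagLeffler α (-(ξ * T ^ α)) := by
  have hα0 := hα.1
  have e : ∀ k : ℕ, (1 - α) + α * ((k:ℝ) + 1) = α * k + 1 := fun k => by ring
  have h := ml_frac (1 - α) (by linarith [hα.2]) (fun k => α * (k + 1)) (fun k => (-ξ) ^ (k + 1))
    (fun k => by positivity) T hT ?_
  · rw [show 1 - α - 1 = -α by ring] at h
    rw [h, ml_series α ξ T hT.le, ← tsum_mul_left, ← tsum_mul_left]
    congr 1
    ext k
    rw [e]
    ring
  · have := (ml_summable α hα0 (ξ * T ^ α)).mul_left |ξ|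
    refine this.congr (fun k => ?_)
    rw [e, add_sub_cancel_right, Real.rpow_mul hT.le, Real.rpow_natCast, abs_pow, abs_neg, abs_mul,
      abs_of_nonneg (Real.rpow_nonneg hT.le α)]
    ring

/-- Volterra equation. -/
lemma ml_volterra (α ξ T : ℝ) (hα : 0 < α) (hT : 0 < T) :
    ξ * ∫ s in (0:ℝ)..T, (T - s) ^ (α - 1) * mittagLeffler α (-(ξ * s ^ α))
    = Real.Gamma α * (1 - mittagLeffler α (-(ξ * T ^ α))) := by
  have e : ∀ k : ℕ, α + (α * (k:ℝ) + 1) = α * ((k + 1 : ℕ) : ℝ) + 1 := fun k => by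
    push_cast; ring
  have hs1 := ml_summable α hα (ξ * T ^ α)
  have h := ml_frac α hα (fun k => α * k + 1) (fun k => (-ξ) ^ k)
    (fun k => by positivity) T hT ?_
  · have h3 : ∫ s in (0:ℝ)..T, (T - s) ^ (α - 1) * mittagLeffler α (-(ξ * s ^ α))
        = ∫ s in (0:ℝ)..T, (T - s) ^ (α - 1) *
          ∑' k : ℕ, (-ξ) ^ k * s ^ ((α * k + 1) - 1) / Real.Gamma (α * k + 1) := by
      apply intervalIntegral.integral_congr
      intro s hs
      rw [uIcc_of_le hT.le] at hs
      simp only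
      rw [ml_series α ξ s hs.1]
    have hs2 : Summable (fun k : ℕ =>
        (-ξ) ^ k * T ^ ((α * k + 1) - 1) / Real.Gamma (α * k + 1)) := by
      refine hs1.of_norm_bounded (fun k => ?_)
      have hg : 0 < Real.Gamma (α * k + 1) := Real.Gamma_pos_of_pos (by positivity)
      rw [norm_div, Real.norm_of_nonneg hg.le, add_sub_cancel_right, Real.rpow_mul hT.le,
        Real.rpow_natCast, ← mul_pow, norm_pow, Real.norm_eq_abs, neg_mul, abs_neg]
    rw [h3, h, ml_series α ξ T hT.le, hs2.tsum_eq_zero_add]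
    simp only [e]
    simp only [Nat.cast_zero, mul_zero, zero_add, sub_self, Real.rpow_zero, Real.Gamma_one,
      pow_zero, div_one, mul_one, sub_add_cancel_left]
    rw [← tsum_neg, ← tsum_mul_left, ← tsum_mul_left, ← tsum_mul_left]
    congr 1
    ext k
    ring
  · by_cases hξ : ξ = 0
    · subst hξ
      apply summable_of_ne_finset_zero (s := {0})
      intro k hk
      have : k ≠ 0 := by simpa using hk
      simp [this]
    · have := ((summable_nat_add_iff 1).2 hs1).mul_left |ξ|⁻¹
      refine this.congr (fun k => ?_)
      have hξ' : |ξ| ≠ 0 := by simpa using hξ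
      rw [e, add_sub_cancel_right, Real.rpow_mul hT.le, Real.rpow_natCast, abs_pow, abs_neg,
        abs_mul, abs_of_nonneg (Real.rpow_nonneg hT.le α), mul_pow, pow_succ |ξ|]
      field_simp

lemma ml_cont (α ξ : ℝ) (hα : 0 < α) :
    Continuous (fun s : ℝ => mittagLeffler α (-(ξ * s ^ α))) := by
  have h1 : Continuous (mittagLeffler α) :=
    continuous_iff_continuousAt.2 fun x => (ml_hasDeriv α hα x).continuousAt
  apply h1.comp
  apply Continuous.neg
  apply continuous_const.mul
  exact Real.continuous_rpow_const hα.le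

lemma ml_zero (α : ℝ) : mittagLeffler α 0 = 1 := by
  unfold mittagLeffler
  rw [tsum_eq_single 0]
  · simp
  · intro k hk; simp [hk]

/-- Boundedness of the Mittag-Leffler function on the negative axis. -/
lemma ml_bound (α ξ σ : ℝ) (hα : α ∈ Ioo (0:ℝ) 1) (hξ : 0 < ξ) (hσ : |σ| ≤ 1) (t : ℝ)
    (ht : 0 ≤ t) : σ * mittagLeffler α (-(ξ * t ^ α)) ≤ 1 := by
  by_contra! hcon
  set φ : ℝ → ℝ := fun s => σ * mittagLeffler α (-(ξ * s ^ α)) with hφ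
  have hcφ : Continuous φ := continuous_const.mul (ml_cont α ξ hα.1)
  obtain ⟨T, hTm, hTmax⟩ := isCompact_Icc.exists_isMaxOn (⟨0, le_rfl, ht⟩ : (Icc 0 t).Nonempty)
    hcφ.continuousOn
  have hφT : 1 < φ T := lt_of_lt_of_le hcon (hTmax ⟨ht, le_rfl⟩)
  have hT : 0 < T := by
    rcases eq_or_lt_of_le hTm.1 with h | h
    · exfalso
      rw [← h] at hφT
      simp only [hφ, Real.zero_rpow hα.1.ne', mul_zero, neg_zero, ml_zero, mul_one] at hφT
      linarith [le_abs_self σ]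
    · exact h
  set D : ℝ → ℝ := fun s =>
    ∑' k : ℕ, (-ξ) ^ (k + 1) * s ^ ((α * (k + 1)) - 1) / Real.Gamma (α * (k + 1)) with hD
  have hcap : ∫ s in (0:ℝ)..T, (T - s) ^ (-α) * (σ * D s) = -(ξ * Real.Gamma (1 - α)) * φ T := by
    have h := ml_caputo α ξ T hα hT
    have : ∀ s, (T - s) ^ (-α) * (σ * D s) = σ * ((T - s) ^ (-α) * D s) := fun s => by ring
    simp_rw [this]
    rw [intervalIntegral.integral_const_mul, h]
    simp only [hφ]
    ring
  have hG : 0 < Real.Gamma (1 - α) := Real.Gamma_pos_of_pos (by linarith [hα.2])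
  have hneg : -(ξ * Real.Gamma (1 - α)) * φ T < 0 := by
    have : 0 < ξ * Real.Gamma (1 - α) * φ T := by positivity
    linarith
  have hpos := ml_max α T hα hT φ (fun s => σ * D s) hcφ.continuousOn
    (fun s hs => (ml_deriv α ξ s hα.1 hs.1).const_mul σ)
    (fun s hs => hTmax ⟨hs.1, hs.2.trans hTm.2⟩) ?_
  · linarith
  · by_contra h
    rw [intervalIntegral.integral_undef h] at hcap
    linarith

/-- Laplace transform of t ↦ E_α(-ξ t^α): equals λ^{α-1}/(λ^α + ξ). -/
theorem stmt_5 (α ξ : ℝ) (hα : α ∈ Set.Ioo (0:ℝ) 1) (hξ : 0 < ξ) :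
    ∀ lam : ℝ, 0 < lam →
      ∫ t in Ioi (0:ℝ), Real.exp (-(lam * t)) * mittagLeffler α (-(ξ * t ^ α))
        = lam ^ (α - 1) / (lam ^ α + ξ) := by
  intro lam hlam
  have hα0 := hα.1
  set f : ℝ → ℝ := fun t => mittagLeffler α (-(ξ * t ^ α)) with hf
  have hG : 0 < Real.Gamma α := Real.Gamma_pos_of_pos hα0
  have hfb : ∀ t ∈ Ioi (0:ℝ), |f t| ≤ 1 := by
    intro t ht
    have h1 := ml_bound α ξ 1 hα hξ (by simp) t (le_of_lt ht)
    have h2 := ml_bound α ξ (-1) hα hξ (by simp) t (le_of_lt ht)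
    rw [abs_le]
    constructor
    · simp only [hf]; linarith
    · simp only [hf]; linarith
  have hexp : IntegrableOn (fun t => Real.exp (-(lam * t))) (Ioi 0) := by
    have := exp_neg_integrableOn_Ioi 0 hlam
    simpa [neg_mul] using this
  have hexpv : ∫ t in Ioi (0:ℝ), Real.exp (-(lam * t)) = 1 / lam := by
    have := integral_rpow_mul_exp_neg_mul_Ioi (a := 1) (r := lam) one_pos hlam
    simpa using this
  have hfi : IntegrableOn (fun t => Real.exp (-(lam * t)) * f t) (Ioi 0) := by
    refine Integrable.mono' hexp ?_ ?_
    · have := (ml_cont α ξ hα0)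
      have h2 : Continuous (fun t => Real.exp (-(lam * t)) * f t) := by fun_prop
      exact h2.aestronglyMeasurable
    · filter_upwards [ae_restrict_mem measurableSet_Ioi] with t ht
      rw [norm_mul, Real.norm_of_nonneg (Real.exp_pos _).le, Real.norm_eq_abs]
      exact mul_le_of_le_one_right (Real.exp_pos _).le (hfb t ht)
  have hkv := integral_rpow_mul_exp_neg_mul_Ioi (a := α) (r := lam) hα0 hlam
  have hki : IntegrableOn (fun t : ℝ => t ^ (α - 1) * Real.exp (-(lam * t))) (Ioi 0) := by
    by_contra h
    rw [integral_undef h] at hkv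
    have : 0 < (1 / lam) ^ α * Real.Gamma α := by positivity
    linarith
  have hconv := integral_posConvolution hfi hki (ContinuousLinearMap.mul ℝ ℝ)
  simp only [ContinuousLinearMap.mul_apply'] at hconv
  rw [hkv] at hconv
  have hL : ∫ x in Ioi (0:ℝ), ∫ t in (0:ℝ)..x,
      Real.exp (-(lam * t)) * f t * ((x - t) ^ (α - 1) * Real.exp (-(lam * (x - t))))
      = ∫ x in Ioi (0:ℝ), (Real.Gamma α / ξ) *
        (Real.exp (-(lam * x)) - Real.exp (-(lam * x)) * f x) := by
    apply setIntegral_congr_fun measurableSet_Ioi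
    intro x hx
    have hv := ml_volterra α ξ x hα0 hx
    have e : ∀ t, Real.exp (-(lam * t)) * f t * ((x - t) ^ (α - 1) * Real.exp (-(lam * (x - t))))
        = Real.exp (-(lam * x)) * ((x - t) ^ (α - 1) * f t) := by
      intro t
      rw [show -(lam * x) = -(lam * t) + -(lam * (x - t)) by ring, Real.exp_add]
      ring
    simp only [e]
    rw [intervalIntegral.integral_const_mul]
    have hv2 : ∫ s in (0:ℝ)..x, (x - s) ^ (α - 1) * f s = Real.Gamma α * (1 - f x) / ξ := by
      rw [eq_div_iff hξ.ne', mul_comm]; exact hv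
    rw [hv2]
    ring
  rw [hL, integral_const_mul, integral_sub hexp hfi, hexpv] at hconv
  set I := ∫ t in Ioi (0:ℝ), Real.exp (-(lam * t)) * f t with hI
  have hla : 0 < lam ^ α := by positivity
  rw [Real.div_rpow zero_le_one hlam.le, Real.one_rpow] at hconv
  rw [Real.rpow_sub_one hlam.ne', eq_div_iff (by positivity)]
  field_simp at hconv ⊢
  linarith
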